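/- Let P^{(1)},…,P^{(n)} be drawn i.i.d. from a meta-distribution μ, and from each P^{(j)} draw an i.i.d. sample of m points, all samples mutually independent. Then with confidence at least 1 − 2δ, simultaneously for all f ∈ F: L^μ(f) ≤ L̂^μ(f) + 2·R_{mn}(F) + 2·R_n(F) + 3·√(ln(2/δ)/(2mn)) + 3·√(ln(2/δ)/n). -/

import Mathlib

open MeasureTheory Real Filter

noncomputable section

/-- The output space `Y = {1, -1}`, as a subtype of the integers. -/
abbrev Ysp : Type := ({1, -1} : Set ℤ)

/-- The risk `L_P(f) = E_{(x,y) ~ P}[ℓ(f(x), y)]` of a decision function `f`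
under a distribution `P` on `X × Y`. -/
def risk {X : Type*} [MeasurableSpace X] (ℓ : Ysp → Ysp → ℝ)
    (P : Measure (X × Ysp)) (f : X → Ysp) : ℝ :=
  ∫ p, ℓ (f p.1) p.2 ∂P

/-- The population risk `L^μ(f) = E_{P ~ μ}[L_P(f)]` under a meta-distribution `μ`. -/
def metaRisk {X : Type*} [MeasurableSpace X] (ℓ : Ysp → Ysp → ℝ)
    (μ : Measure (Measure (X × Ysp))) (f : X → Ysp) : ℝ :=
  ∫ P, risk ℓ P f ∂μ

/-- Interpret a boolean as a random sign in `{-1, +1}`. -/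
def sgn (b : Bool) : ℝ := if b then 1 else -1

/-- Empirical Rademacher complexity of the class `F` on the sample `S`:
the expectation, over i.i.d. uniform random signs `σ`, of
`sup_{f ∈ F} (1/N) ∑ₖ σₖ ℓ(f(xₖ), yₖ)` where `N` is the sample size. -/
def rad {X : Type*} [MeasurableSpace X] (ℓ : Ysp → Ysp → ℝ) (F : Set (X → Ysp))
    {ι : Type*} [Fintype ι] [DecidableEq ι] (S : ι → X × Ysp) : ℝ :=
  (∑ σ : ι → Bool, ⨆ f ∈ F,
      (Fintype.card ι : ℝ)⁻¹ * ∑ k, sgn (σ k) * ℓ (f (S k).1) (S k).2) /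
    2 ^ Fintype.card ι

/-- Domain-level Rademacher average of `F` on the domains `P 0, …, P (n-1)`:
the expectation, over i.i.d. uniform random signs `σ`, of
`sup_{f ∈ F} (1/n) ∑ⱼ σⱼ L_{P⁽ʲ⁾}(f)`. -/
def radDom {X : Type*} [MeasurableSpace X] (ℓ : Ysp → Ysp → ℝ) (F : Set (X → Ysp))
    {n : ℕ} (P : Fin n → Measure (X × Ysp)) : ℝ :=
  (∑ σ : Fin n → Bool, ⨆ f ∈ F,
      (n : ℝ)⁻¹ * ∑ j, sgn (σ j) * risk ℓ (P j) f) / 2 ^ n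

/-- The joint law of (the tuple of `n` i.i.d. domains drawn from a meta-distribution `μ`,
an `n × m` array of samples whose `j`-th row consists of `m` i.i.d. samples from
the `j`-th drawn domain). -/
def jointLaw {X : Type*} [MeasurableSpace X] (n m : ℕ)
    (μ : Measure (Measure (X × Ysp))) :
    Measure ((Fin n → Measure (X × Ysp)) × ((Fin n × Fin m) → X × Ysp)) :=
  (Measure.pi fun _ : Fin n => μ).bind fun P =>
    (Measure.pi fun p : Fin n × Fin m => P p.1).map fun s => (P, s)

/-!
The gap `L^μ(f) - L̂^μ(f)` is the deviation of the mean risk over the `n` drawn domains from its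
`μ`-mean, plus the deviation of the empirical risk from the mean risk over those domains. Given the
domains, the pooled sample consists of `mn` independent, not identically distributed points, so both
terms are instances of one bound on `D = sup_f (1/N) ∑ₖ (E[f(zₖ)] - f(zₖ))` for independent `zₖ`.

Comparison with a ghost sample, whose points can be exchanged with those of the sample without
changing their joint law, gives `E[D] ≤ 2 E[R]`, where `R` is the Rademacher average of the sample.
McDiarmid's inequality is applied to `D - 2R` directly, so that concentration of `D` and of `R`
costs a single failure event of probability `δ / 2`; the two levels together fail with probability
at most `δ`.
-/

open ProbabilityTheory
open scoped NNReal BigOperators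

/-- The hypothesis of McDiarmid's inequality: changing the `k`-th coordinate alone moves the value
of `f` by at most `c k`. Since `x` and `y` may be exchanged, no absolute value is needed. -/
def HasBoundedDifferences {ι : Type*} {Z : ι → Type*} (f : (∀ i, Z i) → ℝ) (c : ι → ℝ≥0) : Prop :=
  ∀ k x y, (∀ j ≠ k, x j = y j) → f x - f y ≤ c k

namespace HasBoundedDifferences

variable {ι ι' : Type*} {Z : ι → Type*} {f : (∀ i, Z i) → ℝ} {c : ι → ℝ≥0}

lemma const_mul (hf : HasBoundedDifferences f c) (r : ℝ≥0) :
    HasBoundedDifferences (fun x => r * f x) fun k => r * c k := fun k x y hxy => by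
  simpa only [← mul_sub] using! mul_le_mul_of_nonneg_left (hf k x y hxy) r.2

lemma sub {f' : (∀ i, Z i) → ℝ} {c' : ι → ℝ≥0} (hf : HasBoundedDifferences f c)
    (hf' : HasBoundedDifferences f' c') :
    HasBoundedDifferences (fun x => f x - f' x) fun k => c k + c' k := fun k x y hxy => by
  push_cast
  linarith [hf k x y hxy, hf' k y x fun j hj => (hxy j hj).symm]

lemma piCongrLeft (hf : HasBoundedDifferences f c) (e : ι' ≃ ι) :
    HasBoundedDifferences (fun x => f (e.piCongrLeft Z x)) (c ∘ e) := by
  refine fun k x y hxy => hf (e k) _ _ fun j hj => ?_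
  obtain ⟨i, rfl⟩ := e.surjective j
  simpa using hxy i (by rintro rfl; exact hj rfl)

variable {n : ℕ} {Z : Fin (n + 1) → Type*} {f : (∀ i, Z i) → ℝ} {c : Fin (n + 1) → ℝ≥0}

lemma insertNth (hf : HasBoundedDifferences f c) (i : Fin (n + 1)) (a : Z i) :
    HasBoundedDifferences (fun w => f (i.insertNth a w)) (i.removeNth c) := by
  refine fun k x y hxy => hf (i.succAbove k) _ _ <|
    i.forall_iff_succAbove.2 ⟨by simp, fun j hj => ?_⟩
  simpa using hxy j fun h => hj (h ▸ rfl)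

lemma insertNth_sub_insertNth_le (hf : HasBoundedDifferences f c) (i : Fin (n + 1)) (a b : Z i)
    (w : ∀ j, Z (i.succAbove j)) : f (i.insertNth a w) - f (i.insertNth b w) ≤ c i :=
  hf i _ _ (i.forall_iff_succAbove.2 ⟨fun h => absurd rfl h, by simp⟩)

end HasBoundedDifferences

section SubGaussian

lemma exists_forall_mem_Icc_of_sub_le {A : Type*} [Nonempty A] {f : A → ℝ} {c : ℝ}
    (hc : ∀ x y, f x - f y ≤ c) : ∃ b, ∀ x, f x ∈ Set.Icc b (b + c) := by
  have hbdd : BddBelow (Set.range f) :=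
    ⟨f (Classical.arbitrary A) - c, Set.forall_mem_range.2 fun x =>
      sub_le_comm.1 (hc (Classical.arbitrary A) x)⟩
  exact ⟨⨅ x, f x, fun x => ⟨ciInf_le hbdd x,
    sub_le_iff_le_add.1 (le_ciInf fun y => by linarith [hc x y])⟩⟩

variable {A B : Type*} [MeasurableSpace A] [MeasurableSpace B]

lemma hasSubgaussianMGF_sub_integral_of_sub_le {ν : Measure A} [IsProbabilityMeasure ν] {f : A → ℝ}
    {c : ℝ≥0} (hf : Measurable f) (hc : ∀ x y, f x - f y ≤ c) :
    HasSubgaussianMGF (fun x => f x - ∫ y, f y ∂ν) ((c / 2) ^ 2) ν := by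
  have := nonempty_of_isProbabilityMeasure ν
  obtain ⟨b, hb⟩ := exists_forall_mem_Icc_of_sub_le hc
  simpa using hasSubgaussianMGF_of_mem_Icc hf.aemeasurable (ae_of_all ν hb)

lemma hasSubgaussianMGF_sub_integral_of_measurePreserving {ν : Measure A} {ρ : Measure B}
    {e : A ≃ᵐ B} (he : MeasurePreserving e ν ρ) {f : A → ℝ} {s : ℝ≥0}
    (h : HasSubgaussianMGF (fun b => f (e.symm b) - ∫ b', f (e.symm b') ∂ρ) s ρ) :
    HasSubgaussianMGF (fun a => f a - ∫ a', f a' ∂ν) s ν := by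
  rw [← he.map_eq] at h
  simpa only [Function.comp_def, integral_map_equiv, e.symm_apply_apply]
    using h.of_map e.measurable.aemeasurable

lemma hasSubgaussianMGF_add_prod {ν : Measure A} [SFinite ν] {ρ : Measure B} [SFinite ρ]
    {X : A → ℝ} {Y : A × B → ℝ} {r s : ℝ≥0} (hX : HasSubgaussianMGF X r ν) (hYm : Measurable Y)
    (hY : ∀ a, HasSubgaussianMGF (fun b => Y (a, b)) s ρ) :
    HasSubgaussianMGF (fun p => X p.1 + Y p) (r + s) (ν.prod ρ) := by
  have hle (t : ℝ) (a : A) : ∫ b, exp (t * (X a + Y (a, b))) ∂ρ ≤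
      exp (t * X a) * exp (s * t ^ 2 / 2) := by
    simp_rw [mul_add, exp_add, integral_const_mul]
    gcongr
    exact (hY a).mgf_le t
  have hdom (t : ℝ) : Integrable (fun a => exp (t * X a) * exp (s * t ^ 2 / 2)) ν :=
    (hX.integrable_exp_mul t).mul_const _
  have hint (t : ℝ) : Integrable (fun p : A × B => exp (t * (X p.1 + Y p))) (ν.prod ρ) := by
    have hm : AEStronglyMeasurable (fun p : A × B => exp (t * (X p.1 + Y p))) (ν.prod ρ) :=
      ((hX.aemeasurable.comp_fst.add hYm.aemeasurable).const_mul t).exp.aestronglyMeasurable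
    refine (integrable_prod_iff hm).2 ⟨ae_of_all _ fun a => ?_,
      (hdom t).mono' hm.norm.integral_prod_right' (ae_of_all _ fun a => ?_)⟩
    · simpa only [mul_add, exp_add] using ((hY a).integrable_exp_mul t).const_mul (exp (t * X a))
    · simp only [norm_eq_abs, abs_exp]
      exact (abs_of_nonneg (integral_nonneg fun _ => exp_nonneg _)).trans_le (hle t a)
  refine ⟨hint, fun t => ?_⟩
  calc ∫ p, exp (t * (X p.1 + Y p)) ∂ν.prod ρ
      = ∫ a, ∫ b, exp (t * (X a + Y (a, b))) ∂ρ ∂ν := integral_prod _ (hint t)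
    _ ≤ ∫ a, exp (t * X a) * exp (s * t ^ 2 / 2) ∂ν :=
        integral_mono (hint t).integral_prod_left (hdom t) (hle t)
    _ = mgf X ν t * exp (s * t ^ 2 / 2) := integral_mul_const _ _
    _ ≤ exp (r * t ^ 2 / 2) * exp (s * t ^ 2 / 2) := by gcongr; exact hX.mgf_le t
    _ = exp ((r + s : ℝ≥0) * t ^ 2 / 2) := by rw [← exp_add]; congr 1; push_cast; ring

/-- The tensorization step of McDiarmid's inequality: `f` is centred first in the second variable,
then its partial mean is centred in the first. -/
lemma hasSubgaussianMGF_sub_integral_prod {ν : Measure A} [IsProbabilityMeasure ν] {ρ : Measure B}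
    [IsProbabilityMeasure ρ] {f : A × B → ℝ} {c s : ℝ≥0} (hf : Measurable f)
    (hc : ∀ a a' b, f (a, b) - f (a', b) ≤ c)
    (hs : ∀ a, HasSubgaussianMGF (fun b => f (a, b) - ∫ b', f (a, b') ∂ρ) s ρ) :
    HasSubgaussianMGF (fun p => f p - ∫ q, f q ∂ν.prod ρ) ((c / 2) ^ 2 + s) (ν.prod ρ) := by
  have hsec (a) : Integrable (fun b => f (a, b)) ρ := by
    simpa only [sub_eq_add_neg, integrable_add_const_iff] using (hs a).integrable
  have hmeanm : Measurable fun a => ∫ b, f (a, b) ∂ρ :=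
    hf.stronglyMeasurable.integral_prod_right'.measurable
  have hmean : HasSubgaussianMGF (fun a => ∫ b, f (a, b) ∂ρ - ∫ a', ∫ b, f (a', b) ∂ρ ∂ν)
      ((c / 2) ^ 2) ν := by
    refine hasSubgaussianMGF_sub_integral_of_sub_le hmeanm fun a a' => ?_
    calc ∫ b, f (a, b) ∂ρ - ∫ b, f (a', b) ∂ρ = ∫ b, (f (a, b) - f (a', b)) ∂ρ :=
          (integral_sub (hsec a) (hsec a')).symm
      _ ≤ ∫ _, (c : ℝ) ∂ρ :=
          integral_mono ((hsec a).sub (hsec a')) (integrable_const _) (hc a a')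
      _ = c := by simp
  have hsum : HasSubgaussianMGF (fun p => f p - ∫ a, ∫ b, f (a, b) ∂ρ ∂ν) ((c / 2) ^ 2 + s)
      (ν.prod ρ) := by
    convert hasSubgaussianMGF_add_prod hmean (hf.sub (hmeanm.comp measurable_fst)) hs using 2
    simp
  have hint : Integrable f (ν.prod ρ) := by
    simpa only [sub_eq_add_neg, integrable_add_const_iff] using hsum.integrable
  rwa [← integral_prod f hint] at hsum

end SubGaussian

namespace HasBoundedDifferences

lemma hasSubgaussianMGF_fin : ∀ {n : ℕ} {Z : Fin n → Type*} [∀ i, MeasurableSpace (Z i)]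
    {ν : ∀ i, Measure (Z i)} [∀ i, IsProbabilityMeasure (ν i)] {f : (∀ i, Z i) → ℝ}
    {c : Fin n → ℝ≥0}, HasBoundedDifferences f c → Measurable f →
    HasSubgaussianMGF (fun x => f x - ∫ y, f y ∂Measure.pi ν) (∑ i, (c i / 2) ^ 2) (Measure.pi ν)
  | 0, _, _, _, _, f, _, _, _ => by
    have hconst (x) : f x = f default := congrArg f (Subsingleton.elim _ _)
    simp [hconst]
  | n + 1, Z, _, ν, _, f, c, hf, hfm => by
    let e := MeasurableEquiv.piFinSuccAbove Z 0
    let ρ := Measure.pi fun i => ν (Fin.succAbove 0 i)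
    have he : MeasurePreserving e (Measure.pi ν) ((ν 0).prod ρ) :=
      measurePreserving_piFinSuccAbove ν 0
    have hfe : Measurable fun p => f (e.symm p) := hfm.comp e.symm.measurable
    rw [Fin.sum_univ_succAbove _ 0]
    exact hasSubgaussianMGF_sub_integral_of_measurePreserving he <|
      hasSubgaussianMGF_sub_integral_prod hfe (hf.insertNth_sub_insertNth_le 0) fun a =>
        (hf.insertNth 0 a).hasSubgaussianMGF_fin (hfe.comp measurable_prodMk_left)

lemma hasSubgaussianMGF {ι : Type*} [Fintype ι] {Z : ι → Type*} [∀ i, MeasurableSpace (Z i)]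
    {ν : ∀ i, Measure (Z i)} [∀ i, IsProbabilityMeasure (ν i)] {f : (∀ i, Z i) → ℝ} {c : ι → ℝ≥0}
    (hf : HasBoundedDifferences f c) (hfm : Measurable f) :
    HasSubgaussianMGF (fun x => f x - ∫ y, f y ∂Measure.pi ν) (∑ i, (c i / 2) ^ 2)
      (Measure.pi ν) := by
  let e := (Fintype.equivFin ι).symm
  have hE : MeasurePreserving (MeasurableEquiv.piCongrLeft Z e) (Measure.pi fun i => ν (e i))
      (Measure.pi ν) := measurePreserving_piCongrLeft ν e
  rw [← e.sum_comp fun i => (c i / 2) ^ 2]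
  exact hasSubgaussianMGF_sub_integral_of_measurePreserving hE.symm <|
    (hf.piCongrLeft e).hasSubgaussianMGF_fin (hfm.comp hE.measurable)

lemma measure_ge_le {ι : Type*} [Fintype ι] {Z : ι → Type*} [∀ i, MeasurableSpace (Z i)]
    {ν : ∀ i, Measure (Z i)} [∀ i, IsProbabilityMeasure (ν i)] {f : (∀ i, Z i) → ℝ} {c : ι → ℝ≥0}
    (hf : HasBoundedDifferences f c) (hfm : Measurable f) {ε : ℝ} (hε : 0 ≤ ε) :
    (Measure.pi ν).real {x | ε ≤ f x - ∫ y, f y ∂Measure.pi ν} ≤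
      exp (-2 * ε ^ 2 / ∑ i, (c i : ℝ) ^ 2) := by
  refine ((hf.hasSubgaussianMGF hfm).measure_ge_le hε).trans_eq ?_
  congr 1
  push_cast
  simp_rw [div_pow, ← Finset.sum_div]
  ring_nf

end HasBoundedDifferences

section Average

variable {ι A : Type*} [Fintype ι]

lemma abs_expect_le_of_forall [Nonempty ι] {u : ι → ℝ} {C : ℝ} (hu : ∀ k, |u k| ≤ C) :
    |𝔼 k, u k| ≤ C :=
  (Finset.abs_expect_le _ _).trans (Finset.expect_le Finset.univ_nonempty fun k _ => hu k)

lemma expect_sub_expect_le {u v : ι → ℝ} {c : ℝ} {k : ι} (huv : ∀ j ≠ k, u j = v j)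
    (hk : u k - v k ≤ c) : 𝔼 j, u j - 𝔼 j, v j ≤ c / Fintype.card ι := by
  rw [← Finset.expect_sub_distrib, Fintype.expect_eq_sum_div_card,
    Finset.sum_eq_single k (fun j _ hj => sub_eq_zero.2 (huv j hj)) (by simp)]
  gcongr

variable [MeasurableSpace A] {ν : Measure A} {h : ι → A → ℝ}

lemma measurable_expect (hm : ∀ k, Measurable (h k)) : Measurable fun a => 𝔼 k, h k a := by
  simp_rw [Fintype.expect_eq_sum_div_card]
  fun_prop

lemma integral_expect (hi : ∀ k, Integrable (h k) ν) :
    ∫ a, 𝔼 k, h k a ∂ν = 𝔼 k, ∫ a, h k a ∂ν := by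
  simp_rw [Fintype.expect_eq_sum_div_card, integral_div]
  rw [integral_finsetSum _ fun k _ => hi k]

lemma integrable_expect (hi : ∀ k, Integrable (h k) ν) : Integrable (fun a => 𝔼 k, h k a) ν := by
  simp_rw [Fintype.expect_eq_sum_div_card]
  exact (integrable_finsetSum _ fun k _ => hi k).div_const _

end Average

section SupMean

/-- The largest average of a family of vectors, `sup_i (1/N) ∑ₖ h i k`. -/
def supMean {I ι : Type*} [Fintype ι] (h : I → ι → ℝ) : ℝ := ⨆ i, 𝔼 k, h i k

variable {I ι : Type*} [Fintype ι]

lemma measurable_supMean {A : Type*} [MeasurableSpace A] [Countable I] {h : I → ι → A → ℝ}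
    (hm : ∀ i k, Measurable (h i k)) : Measurable fun a => supMean fun i k => h i k a :=
  .iSup fun i => measurable_expect (hm i)

variable [Nonempty ι] {h h' : I → ι → ℝ} {C C' : ℝ}

lemma expect_le_supMean (hC : ∀ i k, |h i k| ≤ C) (i : I) : 𝔼 k, h i k ≤ supMean h :=
  le_ciSup (f := fun i => 𝔼 k, h i k)
    ⟨C, Set.forall_mem_range.2 fun i => (le_abs_self _).trans (abs_expect_le_of_forall (hC i))⟩ i

variable [Nonempty I]

lemma abs_supMean_le (hC : ∀ i k, |h i k| ≤ C) : |supMean h| ≤ C := by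
  have hmean (i) := abs_le.1 (abs_expect_le_of_forall (hC i))
  exact abs_le.2 ⟨(hmean (Classical.arbitrary I)).1.trans (expect_le_supMean hC _),
    ciSup_le fun i => (hmean i).2⟩

lemma supMean_add_le (hC : ∀ i k, |h i k| ≤ C) (hC' : ∀ i k, |h' i k| ≤ C') :
    supMean (fun i k => h i k + h' i k) ≤ supMean h + supMean h' :=
  ciSup_le fun i => (Finset.expect_add_distrib _ _ _).trans_le
    (add_le_add (expect_le_supMean hC i) (expect_le_supMean hC' i))

lemma supMean_sub_supMean_le {c : ℝ} {k : ι} (hC' : ∀ i k, |h' i k| ≤ C')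
    (hh' : ∀ i, ∀ j ≠ k, h i j = h' i j) (hk : ∀ i, h i k - h' i k ≤ c) :
    supMean h - supMean h' ≤ c / Fintype.card ι :=
  sub_le_iff_le_add.2 <| ciSup_le fun i => by
    linarith [expect_sub_expect_le (hh' i) (hk i), expect_le_supMean hC' i]

variable {A : Type*} [MeasurableSpace A] {ν : Measure A} [IsFiniteMeasure ν] [Countable I]
  {h : I → ι → A → ℝ}

lemma integrable_supMean (hm : ∀ i k, Measurable (h i k)) (hC : ∀ i k a, |h i k a| ≤ C) :
    Integrable (fun a => supMean fun i k => h i k a) ν :=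
  .of_bound (measurable_supMean hm).aestronglyMeasurable C
    (ae_of_all _ fun a => abs_supMean_le fun i k => hC i k a)

lemma supMean_integral_le (hm : ∀ i k, Measurable (h i k)) (hC : ∀ i k a, |h i k a| ≤ C) :
    supMean (fun i k => ∫ a, h i k a ∂ν) ≤ ∫ a, supMean (fun i k => h i k a) ∂ν := by
  have hi (i k) : Integrable (h i k) ν :=
    .of_bound (hm i k).aestronglyMeasurable C (ae_of_all _ (hC i k))
  refine ciSup_le fun i => ?_
  rw [← integral_expect (hi i)]
  exact integral_mono (integrable_expect (hi i)) (integrable_supMean hm hC) fun a =>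
    expect_le_supMean (fun i k => hC i k a) i

end SupMean

section Rademacher

/-- The Rademacher average of a family of vectors `h i`, that is
`E_σ[sup_i (1/N) ∑ₖ σₖ h i k]` over uniform signs `σ`; it specializes both to `rad` and to
`radDom`. -/
def rademacher {I ι : Type*} [Fintype ι] [DecidableEq ι] (h : I → ι → ℝ) : ℝ :=
  𝔼 σ : ι → Bool, supMean fun i k => sgn (σ k) * h i k

lemma abs_sgn_mul (b : Bool) (x : ℝ) : |sgn b * x| = |x| := by cases b <;> simp [sgn]

lemma sgn_not (b : Bool) : sgn (!b) = -sgn b := by cases b <;> simp [sgn]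

variable {I ι : Type*} [Fintype ι] [DecidableEq ι] {h h' : I → ι → ℝ} {C C' : ℝ}

lemma rademacher_neg : rademacher (fun i k => -h i k) = rademacher h :=
  Fintype.expect_equiv (Equiv.piCongrRight fun _ => Equiv.boolNot) _ _ fun σ => by
    simp [sgn_not]

lemma measurable_rademacher {A : Type*} [MeasurableSpace A] [Countable I] {h : I → ι → A → ℝ}
    (hm : ∀ i k, Measurable (h i k)) : Measurable fun a => rademacher fun i k => h i k a :=
  measurable_expect fun _ => measurable_supMean fun i k => (hm i k).const_mul _

variable [Nonempty ι] [Nonempty I]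

lemma abs_rademacher_le (hC : ∀ i k, |h i k| ≤ C) : |rademacher h| ≤ C :=
  abs_expect_le_of_forall fun _ => abs_supMean_le fun i k => (abs_sgn_mul _ _).trans_le (hC i k)

lemma rademacher_add_le (hC : ∀ i k, |h i k| ≤ C) (hC' : ∀ i k, |h' i k| ≤ C') :
    rademacher (fun i k => h i k + h' i k) ≤ rademacher h + rademacher h' := by
  simp_rw [rademacher, mul_add, ← Finset.expect_add_distrib]
  exact Finset.expect_le_expect fun σ _ => supMean_add_le
    (fun i k => (abs_sgn_mul _ _).trans_le (hC i k))
    (fun i k => (abs_sgn_mul _ _).trans_le (hC' i k))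

lemma rademacher_sub_le (hC : ∀ i k, |h i k| ≤ C) (hC' : ∀ i k, |h' i k| ≤ C') :
    rademacher (fun i k => h i k - h' i k) ≤ rademacher h + rademacher h' := by
  rw [← rademacher_neg (h := h')]
  simpa only [sub_eq_add_neg] using rademacher_add_le hC fun i k => (abs_neg _).trans_le (hC' i k)

lemma rademacher_sub_rademacher_le {c : ℝ} {k : ι} (hC' : ∀ i k, |h' i k| ≤ C')
    (hh' : ∀ i, ∀ j ≠ k, h i j = h' i j) (hk : ∀ i, |h i k - h' i k| ≤ c) :
    rademacher h - rademacher h' ≤ c / Fintype.card ι := by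
  rw [rademacher, rademacher, ← Finset.expect_sub_distrib]
  refine Finset.expect_le Finset.univ_nonempty fun σ _ => supMean_sub_supMean_le
    (fun i k => (abs_sgn_mul _ _).trans_le (hC' i k)) (fun i j hj => by rw [hh' i j hj]) fun i => ?_
  rw [← mul_sub]
  exact (le_abs_self _).trans ((abs_sgn_mul _ _).trans_le (hk i))

lemma hasBoundedDifferences_rademacher {Z : Type*} {g : I → Z → ℝ} {c : ℝ≥0}
    (hC : ∀ i z, |g i z| ≤ C) (hc : ∀ i a b, g i a - g i b ≤ c) :
    HasBoundedDifferences (fun z : ι → Z => rademacher fun i k => g i (z k))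
      fun _ => c / Fintype.card ι := by
  refine fun k x y hxy => ?_
  push_cast
  exact rademacher_sub_rademacher_le (fun i j => hC i (y j)) (fun i j hj => by rw [hxy j hj])
    fun i => abs_sub_le_iff.2 ⟨hc _ _ _, hc _ _ _⟩

lemma integrable_rademacher {A : Type*} [MeasurableSpace A] {ν : Measure A} [IsFiniteMeasure ν]
    [Countable I] {h : I → ι → A → ℝ} (hm : ∀ i k, Measurable (h i k))
    (hC : ∀ i k a, |h i k a| ≤ C) : Integrable (fun a => rademacher fun i k => h i k a) ν :=
  .of_bound (measurable_rademacher hm).aestronglyMeasurable C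
    (ae_of_all _ fun a => abs_rademacher_le fun i k => hC i k a)

end Rademacher

section Symmetrization

lemma abs_integral_le_of_forall {Z : Type*} [MeasurableSpace Z] {ν : Measure Z}
    [IsProbabilityMeasure ν] {u : Z → ℝ} {C : ℝ} (hC : ∀ z, |u z| ≤ C) : |∫ z, u z ∂ν| ≤ C := by
  simpa using norm_integral_le_of_norm_le_const (f := u) (ae_of_all ν hC)

lemma abs_integral_sub_le {Z : Type*} [MeasurableSpace Z] {ν : Measure Z} [IsProbabilityMeasure ν]
    {u : Z → ℝ} {C : ℝ} (hC : ∀ z, |u z| ≤ C) (z : Z) : |∫ a, u a ∂ν - u z| ≤ C + C :=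
  (abs_sub _ _).trans (add_le_add (abs_integral_le_of_forall hC) (hC z))

variable {Z I ι : Type*} [MeasurableSpace Z] [Fintype ι]

/-- The uniform deviation of the means from the empirical means on the sample `z`,
`sup_i (1/N) ∑ₖ (E_{ν k}[g i] - g i (z k))`. The `k`-th point has its own law `ν k`, which
allows for points drawn from different domains. -/
def supDeviation (g : I → Z → ℝ) (ν : ι → Measure Z) (z : ι → Z) : ℝ :=
  supMean fun i k => ∫ a, g i a ∂ν k - g i (z k)

variable {g : I → Z → ℝ} {ν : ι → Measure Z} {C : ℝ}

lemma measurable_supDeviation [Countable I] (hm : ∀ i, Measurable (g i)) :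
    Measurable (supDeviation g ν) :=
  measurable_supMean fun i k => by fun_prop (disch := exact hm _)

variable [∀ k, IsProbabilityMeasure (ν k)]

lemma measurePreserving_swapCoordinates (σ : ι → Bool) :
    MeasurePreserving
      (fun p : (ι → Z) × (ι → Z) => (fun k => if σ k then p.1 k else p.2 k,
        fun k => if σ k then p.2 k else p.1 k))
      ((Measure.pi ν).prod (Measure.pi ν)) ((Measure.pi ν).prod (Measure.pi ν)) := by
  have hcoord (k) : MeasurePreserving
      (fun q : Z × Z => (if σ k then q.1 else q.2, if σ k then q.2 else q.1))
      ((ν k).prod (ν k)) ((ν k).prod (ν k)) := by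
    cases σ k
    · simpa using! Measure.measurePreserving_swap
    · exact MeasurePreserving.id _
  have hpair := measurePreserving_arrowProdEquivProdArrow Z Z ι ν ν
  exact hpair.comp ((measurePreserving_pi _ _ hcoord).comp hpair.symm)

variable [Nonempty ι] [Nonempty I]

lemma hasBoundedDifferences_supDeviation {c : ℝ≥0} (hC : ∀ i z, |g i z| ≤ C)
    (hc : ∀ i a b, g i a - g i b ≤ c) :
    HasBoundedDifferences (supDeviation g ν) fun _ => c / Fintype.card ι := by
  refine fun k x y hxy => ?_
  push_cast
  refine supMean_sub_supMean_le (fun i j => abs_integral_sub_le (hC i) (y j))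
    (fun i j hj => by rw [hxy j hj]) fun i => ?_
  linarith [hc i (y k) (x k)]

variable [Countable I]

lemma integrable_supDeviation (hm : ∀ i, Measurable (g i)) (hC : ∀ i z, |g i z| ≤ C) :
    Integrable (supDeviation g ν) (Measure.pi ν) :=
  .of_bound (measurable_supDeviation hm).aestronglyMeasurable (C + C) <| ae_of_all _ fun z =>
    abs_supMean_le fun i k => abs_integral_sub_le (hC i) (z k)

lemma supDeviation_le_integral (hm : ∀ i, Measurable (g i)) (hC : ∀ i z, |g i z| ≤ C)
    (z : ι → Z) : supDeviation g ν z ≤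
      ∫ z', supMean (fun i k => g i (z' k) - g i (z k)) ∂Measure.pi ν := by
  have hdC (i k) (z' : ι → Z) : |g i (z' k) - g i (z k)| ≤ C + C :=
    (abs_sub _ _).trans (add_le_add (hC _ _) (hC _ _))
  have hmean (i k) : ∫ a, g i a ∂ν k - g i (z k) =
      ∫ z', (g i (z' k) - g i (z k)) ∂Measure.pi ν := by
    have hi : Integrable (g i) (ν k) :=
      .of_bound (hm i).aestronglyMeasurable C (ae_of_all _ (hC i))
    rw [integral_sub (integrable_comp_eval hi) (integrable_const _),
      integral_comp_eval (hm i).aestronglyMeasurable, integral_const, probReal_univ, one_smul]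
  simp_rw [supDeviation, hmean]
  exact supMean_integral_le (fun i k => by fun_prop (disch := exact hm _)) hdC

variable [DecidableEq ι]

/-- Swapping the `k`-th points of the two samples changes the sign of the `k`-th difference, and
does not change the law of the pair of samples. -/
lemma integral_supMean_sub_eq_integral_rademacher_sub (hm : ∀ i, Measurable (g i))
    (hC : ∀ i z, |g i z| ≤ C) :
    ∫ p, supMean (fun i k => g i (p.2 k) - g i (p.1 k)) ∂(Measure.pi ν).prod (Measure.pi ν) =
      ∫ p, rademacher (fun i k => g i (p.2 k) - g i (p.1 k))
        ∂(Measure.pi ν).prod (Measure.pi ν) := by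
  have hdm (i k) : Measurable fun p : (ι → Z) × (ι → Z) => g i (p.2 k) - g i (p.1 k) := by
    fun_prop (disch := exact hm _)
  have hdC (i k) (p : (ι → Z) × (ι → Z)) : |g i (p.2 k) - g i (p.1 k)| ≤ C + C :=
    (abs_sub _ _).trans (add_le_add (hC _ _) (hC _ _))
  have hsign (σ : ι → Bool) :
      ∫ p, supMean (fun i k => sgn (σ k) * (g i (p.2 k) - g i (p.1 k)))
        ∂(Measure.pi ν).prod (Measure.pi ν) =
      ∫ p, supMean (fun i k => g i (p.2 k) - g i (p.1 k))
        ∂(Measure.pi ν).prod (Measure.pi ν) := by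
    have hswap := measurePreserving_swapCoordinates (ν := ν) σ
    conv_rhs => rw [← hswap.map_eq]
    rw [integral_map hswap.measurable.aemeasurable (measurable_supMean hdm).aestronglyMeasurable]
    congr! 5 with p i k
    cases hσ : σ k <;> simp [sgn, hσ]
  simp_rw [rademacher]
  rw [integral_expect fun σ => integrable_supMean (fun i k => (hdm i k).const_mul _)
    fun i k p => (abs_sgn_mul _ _).trans_le (hdC i k p)]
  simp_rw [hsign, Fintype.expect_const]

lemma integral_supDeviation_le (hm : ∀ i, Measurable (g i)) (hC : ∀ i z, |g i z| ≤ C) :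
    ∫ z, supDeviation g ν z ∂Measure.pi ν ≤
      2 * ∫ z, rademacher (fun i k => g i (z k)) ∂Measure.pi ν := by
  set ρ := Measure.pi ν
  have hdm (i k) : Measurable fun p : (ι → Z) × (ι → Z) => g i (p.2 k) - g i (p.1 k) := by
    fun_prop (disch := exact hm _)
  have hdC (i k) (p : (ι → Z) × (ι → Z)) : |g i (p.2 k) - g i (p.1 k)| ≤ C + C :=
    (abs_sub _ _).trans (add_le_add (hC _ _) (hC _ _))
  have hrad : Integrable (fun z : ι → Z => rademacher fun i k => g i (z k)) ρ :=
    integrable_rademacher (fun i k => by fun_prop (disch := exact hm _)) fun i k z => hC i (z k)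
  have hghost : Integrable (fun p => supMean fun i k => g i (p.2 k) - g i (p.1 k)) (ρ.prod ρ) :=
    integrable_supMean hdm hdC
  calc ∫ z, supDeviation g ν z ∂ρ
      ≤ ∫ z, ∫ z', supMean (fun i k => g i (z' k) - g i (z k)) ∂ρ ∂ρ :=
        integral_mono (integrable_supDeviation hm hC) hghost.integral_prod_left
          (supDeviation_le_integral hm hC)
    _ = ∫ p, supMean (fun i k => g i (p.2 k) - g i (p.1 k)) ∂ρ.prod ρ :=
        (integral_prod _ hghost).symm
    _ = ∫ p, rademacher (fun i k => g i (p.2 k) - g i (p.1 k)) ∂ρ.prod ρ :=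
        integral_supMean_sub_eq_integral_rademacher_sub hm hC
    _ ≤ ∫ p, (rademacher (fun i k => g i (p.2 k)) + rademacher (fun i k => g i (p.1 k)))
          ∂ρ.prod ρ :=
        integral_mono (integrable_rademacher hdm hdC) ((hrad.comp_snd ρ).add (hrad.comp_fst ρ))
          fun p => rademacher_sub_le (fun i k => hC i (p.2 k)) fun i k => hC i (p.1 k)
    _ = 2 * ∫ z, rademacher (fun i k => g i (z k)) ∂ρ := by
        rw [integral_add (hrad.comp_snd ρ) (hrad.comp_fst ρ),
          integral_fun_snd fun z : ι → Z => rademacher fun i k => g i (z k),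
          integral_fun_fst fun z : ι → Z => rademacher fun i k => g i (z k),
          probReal_univ, one_smul, two_mul]

/-- The bounded-differences constant is `3 / N`: `1 / N` from the deviation and `2 / N` from twice
the Rademacher average. -/
lemma measureReal_le_supDeviation_le (hm : ∀ i, Measurable (g i))
    (hg : ∀ i z, g i z ∈ Set.Icc (0 : ℝ) 1) {ε : ℝ} (hε : 0 ≤ ε) :
    (Measure.pi ν).real
        {z | 2 * rademacher (fun i k => g i (z k)) + ε ≤ supDeviation g ν z} ≤
      exp (-2 * Fintype.card ι * ε ^ 2 / 9) := by
  have hC (i z) : |g i z| ≤ 1 := abs_le.2 ⟨by linarith [(hg i z).1], (hg i z).2⟩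
  have hc (i a b) : g i a - g i b ≤ (1 : ℝ≥0) := by
    simpa using sub_le_sub (hg i a).2 (hg i b).1
  have hint : Integrable (fun z => rademacher fun i k => g i (z k)) (Measure.pi ν) :=
    integrable_rademacher (fun i k => by fun_prop (disch := exact hm _)) fun i k z => hC i (z k)
  have hmean :
      ∫ z, (supDeviation g ν z - 2 * rademacher fun i k => g i (z k)) ∂Measure.pi ν ≤ 0 := by
    rw [integral_sub (integrable_supDeviation hm hC) (hint.const_mul 2), integral_const_mul]
    exact sub_nonpos.2 (integral_supDeviation_le hm hC)
  have hdiff : HasBoundedDifferences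
      (fun z => supDeviation g ν z - 2 * rademacher fun i k => g i (z k))
      fun _ => 1 / Fintype.card ι + 2 * (1 / Fintype.card ι) :=
    (hasBoundedDifferences_supDeviation hC hc).sub
      ((hasBoundedDifferences_rademacher hC hc).const_mul 2)
  have hmeas : Measurable fun z : ι → Z =>
      supDeviation g ν z - 2 * rademacher fun i k => g i (z k) :=
    (measurable_supDeviation hm).sub <|
      (measurable_rademacher fun i k => by fun_prop (disch := exact hm _)).const_mul 2
  refine (measureReal_mono fun z hz => ?_).trans ((hdiff.measure_ge_le hmeas hε).trans_eq ?_)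
  · simp only [Set.mem_ofPred_eq] at hz ⊢
    linarith
  · have hN : (Fintype.card ι : ℝ) ≠ 0 := Nat.cast_ne_zero.2 Fintype.card_ne_zero
    congr 1
    simp only [Finset.sum_const, Finset.card_univ, nsmul_eq_mul]
    push_cast
    field_simp
    norm_num

lemma measure_lt_supDeviation_le (hm : ∀ i, Measurable (g i))
    (hg : ∀ i z, g i z ∈ Set.Icc (0 : ℝ) 1) {η : ℝ} (hη : 0 < η) :
    Measure.pi ν {z | 2 * rademacher (fun i k => g i (z k)) +
        3 * √(log η⁻¹ / (2 * Fintype.card ι)) < supDeviation g ν z} ≤ ENNReal.ofReal η := by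
  set ε := √(log η⁻¹ / (2 * Fintype.card ι))
  have hlog : log η⁻¹ ≤ 2 * Fintype.card ι * ε ^ 2 := by
    rw [← div_le_iff₀' (by positivity), sq_sqrt']
    exact le_max_left _ _
  rw [← ofReal_measureReal]
  refine ENNReal.ofReal_le_ofReal ?_
  calc (Measure.pi ν).real {z | 2 * rademacher (fun i k => g i (z k)) + 3 * ε < supDeviation g ν z}
      ≤ (Measure.pi ν).real
          {z | 2 * rademacher (fun i k => g i (z k)) + 3 * ε ≤ supDeviation g ν z} :=
        measureReal_mono (Set.ofPred_subset_ofPred.2 fun _ => le_of_lt)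
    _ ≤ exp (-2 * Fintype.card ι * (3 * ε) ^ 2 / 9) :=
        measureReal_le_supDeviation_le hm hg (by positivity)
    _ ≤ exp (-log η⁻¹) := exp_le_exp.2 (by linarith)
    _ = η := by rw [log_inv, neg_neg, exp_log hη]

end Symmetrization

section TwoLevelSampling

variable {Θ Z J K I : Type*} [MeasurableSpace Θ] [MeasurableSpace Z] [Fintype J] [Fintype K]

/-- The law of an array of independent points whose row `j` is drawn from `κ (θ j)`, as a kernel in
the family `θ` of domains. -/
def sampleKernel (J K : Type*) [Fintype J] [Fintype K] (κ : Kernel Θ Z) [IsMarkovKernel κ] :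
    Kernel (J → Θ) (J × K → Z) where
  toFun θ := Measure.pi fun p => κ (θ p.1)
  measurable' := by
    refine .measure_of_isPiSystem_of_isProbabilityMeasure generateFrom_pi.symm isPiSystem_pi ?_
    rintro _ ⟨t, ht, rfl⟩
    simp_rw [Measure.pi_pi]
    exact Finset.measurable_fun_prod _ fun p _ =>
      (κ.measurable_coe (ht p (Set.mem_univ p))).comp (measurable_pi_apply p.1)

variable (τ : Measure Θ) [IsProbabilityMeasure τ] (κ : Kernel Θ Z) [IsMarkovKernel κ]

lemma sampleKernel_apply (θ : J → Θ) :
    sampleKernel J K κ θ = Measure.pi fun p : J × K => κ (θ p.1) := rfl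

instance : IsMarkovKernel (sampleKernel J K κ) :=
  ⟨fun θ => by rw [sampleKernel_apply]; infer_instance⟩

variable {g : I → Z → ℝ}

lemma integral_integral_sub_expect_le [Nonempty J] [Nonempty K] {C : ℝ} (hC : ∀ i z, |g i z| ≤ C)
    (i : I) (θ : J → Θ) (z : J × K → Z) :
    ∫ θ', ∫ a, g i a ∂κ θ' ∂τ - 𝔼 p, g i (z p) ≤
      supDeviation (fun i θ => ∫ a, g i a ∂κ θ) (fun _ => τ) θ +
        supDeviation g (fun p => κ (θ p.1)) z := by
  have hrow : 𝔼 p : J × K, ∫ a, g i a ∂κ (θ p.1) = 𝔼 j, ∫ a, g i a ∂κ (θ j) := by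
    rw [← Finset.univ_product_univ, Finset.expect_product]
    simp_rw [Fintype.expect_const]
  have hmean (i θ) : |∫ a, g i a ∂κ θ| ≤ C := abs_integral_le_of_forall (hC i)
  have hdomain := expect_le_supMean
    (fun i j => abs_integral_sub_le (ν := τ) (hmean i) (θ j)) i
  have hsample := expect_le_supMean
    (fun i p => abs_integral_sub_le (ν := κ (θ p.1)) (hC i) (z p)) i
  rw [Finset.expect_sub_distrib, Fintype.expect_const] at hdomain
  rw [Finset.expect_sub_distrib, hrow] at hsample
  unfold supDeviation
  linarith

variable [DecidableEq J] [Nonempty J] [Countable I] [Nonempty I] {η : ℝ}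

lemma measure_lt_supDeviation_domains_le (hm : ∀ i, Measurable (g i))
    (hg : ∀ i z, g i z ∈ Set.Icc (0 : ℝ) 1) (hη : 0 < η) :
    ((Measure.pi fun _ : J => τ) ⊗ₘ sampleKernel J K κ)
        {ω | 2 * rademacher (fun i j => ∫ z, g i z ∂κ (ω.1 j)) +
          3 * √(log η⁻¹ / (2 * Fintype.card J)) <
          supDeviation (fun i θ => ∫ z, g i z ∂κ θ) (fun _ => τ) ω.1} ≤ ENNReal.ofReal η := by
  have hmean (i) : Measurable fun θ => ∫ z, g i z ∂κ θ :=
    (hm i).stronglyMeasurable.integral_kernel.measurable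
  have hmean01 (i θ) : ∫ z, g i z ∂κ θ ∈ Set.Icc (0 : ℝ) 1 :=
    (convex_Icc 0 1).integral_mem isClosed_Icc (ae_of_all _ (hg i))
      (.of_mem_Icc 0 1 (hm i).aemeasurable (ae_of_all _ (hg i)))
  have hdomains := measure_lt_supDeviation_le (ν := fun _ : J => τ) hmean hmean01 hη
  rw [← Measure.fst_compProd (Measure.pi fun _ : J => τ) (sampleKernel J K κ)] at hdomains
  exact (Measure.le_map_apply measurable_fst.aemeasurable _).trans hdomains

lemma measure_lt_supDeviation_samples_le [DecidableEq K] [Nonempty K]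
    (hm : ∀ i, Measurable (g i)) (hg : ∀ i z, g i z ∈ Set.Icc (0 : ℝ) 1) (hη : 0 < η) :
    ((Measure.pi fun _ : J => τ) ⊗ₘ sampleKernel J K κ)
        {ω | 2 * rademacher (fun i p => g i (ω.2 p)) +
          3 * √(log η⁻¹ / (2 * Fintype.card (J × K))) <
          supDeviation g (fun p => κ (ω.1 p.1)) ω.2} ≤ ENNReal.ofReal η := by
  have hmean (i) : Measurable fun θ => ∫ z, g i z ∂κ θ :=
    (hm i).stronglyMeasurable.integral_kernel.measurable
  rw [Measure.compProd_apply]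
  · calc _ ≤ ∫⁻ _, ENNReal.ofReal η ∂Measure.pi fun _ : J => τ :=
          lintegral_mono fun θ => measure_lt_supDeviation_le hm hg hη
      _ = ENNReal.ofReal η := by simp
  · refine measurableSet_lt (((measurable_rademacher fun i p => ?_).const_mul 2).add_const _)
      (measurable_supMean fun i p => ?_)
    · exact (hm i).comp ((measurable_pi_apply p).comp measurable_snd)
    · exact ((hmean i).comp ((measurable_pi_apply p.1).comp measurable_fst)).sub
        ((hm i).comp ((measurable_pi_apply p).comp measurable_snd))

end TwoLevelSampling

section TwoLevelLaw

variable {Z J K : Type*} [MeasurableSpace Z] [Fintype J] [Fintype K]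

/-- The joint law of a family of i.i.d. domains drawn from `μ` and an array of independent points
whose row `j` is drawn from the `j`-th domain; `jointLaw` is the case `J = Fin n`, `K = Fin m`. -/
def twoLevelLaw (J K : Type*) [Fintype J] [Fintype K] (μ : Measure (Measure Z)) :
    Measure ((J → Measure Z) × (J × K → Z)) :=
  (Measure.pi fun _ : J => μ).bind fun P => (Measure.pi fun p : J × K => P p.1).map fun z => (P, z)

variable {μ : Measure (Measure Z)} [IsProbabilityMeasure μ]

lemma exists_markovKernel_ae_eq_self (hμ : ∀ᵐ P ∂μ, IsProbabilityMeasure P) :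
    ∃ κ : Kernel (Measure Z) Z, IsMarkovKernel κ ∧ ∀ᵐ P ∂μ, κ P = P := by
  let κ₀ : Kernel (Measure Z) Z := ⟨id, measurable_id⟩
  obtain ⟨κ, hκ, hae⟩ := Kernel.exists_ae_eq_isMarkovKernel (κ := κ₀) hμ (NeZero.ne μ)
  exact ⟨κ, hae, hκ.mono fun P hP => hP.symm⟩

lemma ae_pi_forall {Θ : Type*} [MeasurableSpace Θ] {τ : Measure Θ} [SigmaFinite τ] {p : Θ → Prop}
    (hp : ∀ᵐ θ ∂τ, p θ) : ∀ᵐ θ ∂Measure.pi fun _ : J => τ, ∀ j, p (θ j) :=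
  ae_all_iff.2 fun j => (Measure.quasiMeasurePreserving_eval (fun _ => τ) j).ae hp

lemma twoLevelLaw_eq_compProd {κ : Kernel (Measure Z) Z} [IsMarkovKernel κ]
    (hκ : ∀ᵐ P ∂μ, κ P = P) :
    twoLevelLaw J K μ = (Measure.pi fun _ : J => μ) ⊗ₘ sampleKernel J K κ := by
  rw [Measure.compProd_eq_comp_prod]
  refine Measure.bind_congr_right ?_
  filter_upwards [ae_pi_forall hκ] with P hP
  rw [Kernel.prod_apply, Kernel.id_apply, Measure.dirac_prod, sampleKernel_apply]
  simp_rw [hP]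

lemma ae_twoLevelLaw (hμ : ∀ᵐ P ∂μ, IsProbabilityMeasure P) {p : Measure Z → Prop}
    (hp : ∀ᵐ P ∂μ, p P) : ∀ᵐ ω ∂twoLevelLaw J K μ, ∀ j, p (ω.1 j) := by
  obtain ⟨κ, _, hκ⟩ := exists_markovKernel_ae_eq_self hμ
  rw [twoLevelLaw_eq_compProd hκ]
  have hfst := ae_pi_forall (J := J) hp
  rw [← Measure.fst_compProd (Measure.pi fun _ : J => μ) (sampleKernel J K κ)] at hfst
  exact ae_of_ae_map measurable_fst.aemeasurable hfst

lemma isProbabilityMeasure_twoLevelLaw (hμ : ∀ᵐ P ∂μ, IsProbabilityMeasure P) :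
    IsProbabilityMeasure (twoLevelLaw J K μ) := by
  obtain ⟨κ, _, hκ⟩ := exists_markovKernel_ae_eq_self hμ
  rw [twoLevelLaw_eq_compProd hκ]
  infer_instance

end TwoLevelLaw

lemma ofReal_one_sub_le_measure_of_compl {Ω : Type*} [MeasurableSpace Ω] {P : Measure Ω}
    [IsProbabilityMeasure P] {s : Set Ω} {δ : ℝ} (hδ : 0 ≤ δ) (hs : P sᶜ ≤ ENNReal.ofReal δ) :
    ENNReal.ofReal (1 - δ) ≤ P s := by
  rw [ENNReal.ofReal_sub _ hδ, ENNReal.ofReal_one, tsub_le_iff_right]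
  calc 1 = P (s ∪ sᶜ) := by rw [Set.union_compl_self, measure_univ]
    _ ≤ P s + P sᶜ := measure_union_le _ _
    _ ≤ P s + ENNReal.ofReal δ := by gcongr

section LossClass

lemma iSup_subtype_le_iSup_mem {A : Type*} {F : Set A} [Nonempty F] {v : A → ℝ} {C : ℝ}
    (hC : ∀ f ∈ F, v f ≤ C) : ⨆ f : F, v f ≤ ⨆ f ∈ F, v f := by
  have hbdd : BddAbove (Set.range fun f => ⨆ _ : f ∈ F, v f) := by
    refine ⟨max C 0, Set.forall_mem_range.2 fun f => ?_⟩
    by_cases hf : f ∈ F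
    · simp [hf, hC f hf]
    · simp [hf]
  refine ciSup_le fun f => ?_
  simpa using le_ciSup hbdd (f : A)

/-- Equality can fail: a real-valued `⨆ f ∈ F` takes the value `0` at every `f ∉ F`. -/
lemma rademacher_le_sum_iSup_mem {A ι : Type*} [Fintype ι] [DecidableEq ι] [Nonempty ι] {F : Set A}
    [Nonempty F] {h : A → ι → ℝ} {C : ℝ} (hC : ∀ f ∈ F, ∀ k, |h f k| ≤ C) :
    rademacher (fun (f : F) k => h f k) ≤
      (∑ σ : ι → Bool, ⨆ f ∈ F, (Fintype.card ι : ℝ)⁻¹ * ∑ k, sgn (σ k) * h f k) /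
        2 ^ Fintype.card ι := by
  have hcard : (Fintype.card (ι → Bool) : ℝ) = 2 ^ Fintype.card ι := by simp
  rw [rademacher, Fintype.expect_eq_sum_div_card, hcard]
  refine div_le_div_of_nonneg_right (Finset.sum_le_sum fun σ _ => ?_) (by positivity)
  simp_rw [supMean, ← div_eq_inv_mul, ← Fintype.expect_eq_sum_div_card]
  refine iSup_subtype_le_iSup_mem (v := fun f => 𝔼 k, sgn (σ k) * h f k) (C := C) fun f hf => ?_
  exact (le_abs_self _).trans <|
    abs_expect_le_of_forall fun k => (abs_sgn_mul _ _).trans_le (hC f hf k)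

lemma measurable_loss {X : Type*} [MeasurableSpace X] (ℓ : Ysp → Ysp → ℝ) {f : X → Ysp}
    (hf : Measurable f) : Measurable fun z : X × Ysp => ℓ (f z.1) z.2 :=
  (measurable_of_countable fun q : Ysp × Ysp => ℓ q.1 q.2).comp
    ((hf.comp measurable_fst).prodMk measurable_snd)

variable {X : Type*} [MeasurableSpace X] {ℓ : Ysp → Ysp → ℝ} {F : Set (X → Ysp)} [Nonempty F]
  (hℓ : ∀ a b, ℓ a b ∈ Set.Icc (0 : ℝ) 1)

include hℓ

lemma abs_loss_le_one (a b : Ysp) : |ℓ a b| ≤ 1 :=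
  abs_le.2 ⟨by linarith [(hℓ a b).1], (hℓ a b).2⟩

lemma rademacher_loss_le_rad {ι : Type*} [Fintype ι] [DecidableEq ι] [Nonempty ι]
    (S : ι → X × Ysp) :
    rademacher (fun (f : F) k => ℓ (f.1 (S k).1) (S k).2) ≤ rad ℓ F S := by
  simpa only [rad] using
    rademacher_le_sum_iSup_mem (h := fun f k => ℓ (f (S k).1) (S k).2) (F := F) fun _ _ _ =>
      abs_loss_le_one hℓ _ _

lemma rademacher_risk_le_radDom {n : ℕ} [NeZero n] {P : Fin n → Measure (X × Ysp)}
    (hP : ∀ j, IsProbabilityMeasure (P j)) :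
    rademacher (fun (f : F) j => risk ℓ (P j) f) ≤ radDom ℓ F P := by
  simpa only [radDom, Fintype.card_fin] using
    rademacher_le_sum_iSup_mem (h := fun f j => risk ℓ (P j) f) (F := F) fun _ _ _ =>
      abs_integral_le_of_forall fun _ => abs_loss_le_one hℓ _ _

lemma rademacher_bound_le_rad_radDom_bound {n m : ℕ} [NeZero n] [NeZero m]
    {P : Fin n → Measure (X × Ysp)} (hP : ∀ j, IsProbabilityMeasure (P j))
    (S : Fin n × Fin m → X × Ysp) (f : X → Ysp) {t : ℝ} (ht : 0 ≤ t) :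
    𝔼 p, ℓ (f (S p).1) (S p).2 + 2 * rademacher (fun (f : F) p => ℓ (f.1 (S p).1) (S p).2) +
          2 * rademacher (fun (f : F) j => risk ℓ (P j) f) +
          3 * √(t / (2 * Fintype.card (Fin n × Fin m))) + 3 * √(t / (2 * Fintype.card (Fin n))) ≤
      ((m : ℝ) * n)⁻¹ * ∑ p, ℓ (f (S p).1) (S p).2 + 2 * rad ℓ F S + 2 * radDom ℓ F P +
          3 * √(t / (2 * m * n)) + 3 * √(t / n) := by
  have hdomain : t / (2 * Fintype.card (Fin n)) ≤ t / n := by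
    have hn : (0 : ℝ) < n := Nat.cast_pos.2 (NeZero.pos n)
    rw [Fintype.card_fin]
    exact div_le_div_of_nonneg_left ht hn (by linarith)
  have hexpect : 𝔼 p, ℓ (f (S p).1) (S p).2 = ((m : ℝ) * n)⁻¹ * ∑ p, ℓ (f (S p).1) (S p).2 := by
    simp only [Fintype.expect_eq_sum_div_card, Fintype.card_prod, Fintype.card_fin, Nat.cast_mul,
      div_eq_inv_mul, mul_comm (n : ℝ)]
  have hcard : (2 * Fintype.card (Fin n × Fin m) : ℝ) = 2 * m * n := by
    simp only [Fintype.card_prod, Fintype.card_fin, Nat.cast_mul]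
    ring
  rw [hexpect, hcard]
  gcongr
  exacts [rademacher_loss_le_rad hℓ S, rademacher_risk_le_radDom hℓ hP]

end LossClass

theorem statement2_general {Z I J K : Type*} [MeasurableSpace Z] [Countable I]
    [Fintype J] [DecidableEq J] [Nonempty J] [Fintype K] [DecidableEq K] [Nonempty K]
    (μ : Measure (Measure Z)) [IsProbabilityMeasure μ] (hμ : ∀ᵐ P ∂μ, IsProbabilityMeasure P)
    {g : I → Z → ℝ} (hm : ∀ i, Measurable (g i)) (hg : ∀ i z, g i z ∈ Set.Icc (0 : ℝ) 1)
    {δ : ℝ} (hδ : 0 < δ) :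
    ENNReal.ofReal (1 - δ) ≤ twoLevelLaw J K μ {ω | ∀ i,
      ∫ P, ∫ z, g i z ∂P ∂μ ≤
        𝔼 p, g i (ω.2 p) + 2 * rademacher (fun i p => g i (ω.2 p)) +
          2 * rademacher (fun i j => ∫ z, g i z ∂ω.1 j) +
          3 * √(log (2 / δ) / (2 * Fintype.card (J × K))) +
          3 * √(log (2 / δ) / (2 * Fintype.card J))} := by
  have := isProbabilityMeasure_twoLevelLaw (J := J) (K := K) hμ
  obtain ⟨κ, _, hκ⟩ := exists_markovKernel_ae_eq_self hμ
  rcases isEmpty_or_nonempty I with hI | hI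
  · simp [hδ.le]
  have hC (i z) : |g i z| ≤ 1 := abs_le.2 ⟨by linarith [(hg i z).1], (hg i z).2⟩
  have hrisk (i) : ∫ P, ∫ z, g i z ∂P ∂μ = ∫ P, ∫ z, g i z ∂κ P ∂μ :=
    integral_congr_ae (hκ.mono fun P hP => by simp only [hP])
  have hdomains := measure_lt_supDeviation_domains_le (J := J) (K := K) μ κ hm hg (half_pos hδ)
  have hsamples := measure_lt_supDeviation_samples_le (J := J) (K := K) μ κ hm hg (half_pos hδ)
  rw [← twoLevelLaw_eq_compProd hκ, inv_div] at hdomains hsamples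
  refine ofReal_one_sub_le_measure_of_compl hδ.le ?_
  calc twoLevelLaw J K μ _ ≤ _ := measure_mono_ae ?_
    _ ≤ _ := measure_union_le _ _
    _ ≤ ENNReal.ofReal (δ / 2) + ENNReal.ofReal (δ / 2) := add_le_add hdomains hsamples
    _ = ENNReal.ofReal δ := by rw [← ENNReal.ofReal_add (by positivity) (by positivity), add_halves]
  filter_upwards [ae_twoLevelLaw hμ hκ] with ω hω hbad
  contrapose! hbad
  obtain ⟨hdomain, hsample⟩ := not_or.1 hbad
  refine not_not.2 fun i => ?_
  have hsplit := integral_integral_sub_expect_le μ κ hC i ω.1 ω.2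
  simp only [Set.mem_ofPred_eq, not_lt, hω] at hdomain hsample hsplit
  rw [hrisk]
  linarith

/-- With confidence at least `1 - 2δ` over the draw of `n` domains i.i.d.
from the meta-distribution `μ` and `m` i.i.d. samples from each domain,
simultaneously for all `f ∈ F`:
`L^μ(f) ≤ L̂^μ(f) + 2 R_{mn}(F) + 2 R_n(F) + 3 √(ln(2/δ)/(2mn)) + 3 √(ln(2/δ)/n)`. -/
theorem statement2 {X : Type*} [MeasurableSpace X]
    (ℓ : Ysp → Ysp → ℝ) (hℓ01 : ∀ a b, ℓ a b ∈ Set.Icc (0 : ℝ) 1)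
    (hℓLip : LipschitzWith 1 fun p : Ysp × Ysp => ℓ p.1 p.2)
    (F : Set (X → Ysp)) (hFcount : F.Countable) (hFmeas : ∀ f ∈ F, Measurable f)
    (μ : Measure (Measure (X × Ysp))) [IsProbabilityMeasure μ]
    (hμprob : ∀ᵐ P ∂μ, IsProbabilityMeasure P)
    (n m : ℕ) (hn : 0 < n) (hm : 0 < m)
    (δ : ℝ) (hδ0 : 0 < δ) (hδ1 : δ < 1) :
    ENNReal.ofReal (1 - 2 * δ) ≤
      jointLaw n m μ {ω | ∀ f ∈ F,
        metaRisk ℓ μ f ≤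
          ((m : ℝ) * n)⁻¹ * ∑ p : Fin n × Fin m, ℓ (f (ω.2 p).1) (ω.2 p).2
            + 2 * rad ℓ F ω.2 + 2 * radDom ℓ F ω.1
            + 3 * Real.sqrt (Real.log (2 / δ) / (2 * m * n))
            + 3 * Real.sqrt (Real.log (2 / δ) / n)} := by
  have : NeZero n := ⟨hn.ne'⟩
  have : NeZero m := ⟨hm.ne'⟩
  have : Countable F := hFcount.to_subtype
  have hlog : 0 ≤ log (2 / δ) := log_nonneg ((one_le_div hδ0).2 (by linarith))
  refine (ENNReal.ofReal_le_ofReal (by linarith)).trans <| (statement2_general μ hμprob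
    (fun f : F => measurable_loss ℓ (hFmeas f f.2)) (fun _ _ => hℓ01 _ _) hδ0).trans <|
    measure_mono_ae ?_
  filter_upwards [ae_twoLevelLaw hμprob hμprob] with ω hP hω f hf
  have : Nonempty F := ⟨⟨f, hf⟩⟩
  exact (hω ⟨f, hf⟩).trans (rademacher_bound_le_rad_radDom_bound hℓ01 hP ω.2 f hlog)
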